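/- For sufficiently large ρ the following holds: if V ∈ 𝒱(r,n) with n ≤ d, ξ ∈ Ξ(V), and ν = ξ_{V^⊥} is the orthogonal projection of ξ onto V^⊥, then N(ξ + tν) = N(ξ) for all t ≥ 0; in particular N(ξ + tν) ⊆ V. -/

import Mathlib

noncomputable section

open Set Submodule Module MeasureTheory Relation
open scoped RealInnerProductSpace

variable {d : ℕ}

/-- The lattice Γ generated over ℤ by the basis `B` of ℝ^d. -/
def latticeOf (B : Basis (Fin d) ℝ (EuclideanSpace ℝ (Fin d))) :
    Submodule ℤ (EuclideanSpace ℝ (Fin d)) :=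
  Submodule.span ℤ (Set.range B)

/-- The determinant d(Γ) of the lattice generated by `B`. -/
def latDet (B : Basis (Fin d) ℝ (EuclideanSpace ℝ (Fin d))) : ℝ :=
  |(EuclideanSpace.basisFun (Fin d) ℝ).toBasis.det (fun i => B i)|

/-- The dual lattice Γ† = {θ : θ·g ∈ 2πℤ for all g ∈ Γ}. -/
def dualLattice (B : Basis (Fin d) ℝ (EuclideanSpace ℝ (Fin d))) :
    Set (EuclideanSpace ℝ (Fin d)) :=
  {θ | ∀ g ∈ latticeOf B, ∃ k : ℤ, ⟪θ, g⟫ = 2 * Real.pi * k}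

/-- Θ_r : nonzero dual lattice vectors of norm at most r. -/
def Theta (B : Basis (Fin d) ℝ (EuclideanSpace ℝ (Fin d))) (r : ℝ) :
    Set (EuclideanSpace ℝ (Fin d)) :=
  {θ | θ ∈ dualLattice B ∧ θ ≠ 0 ∧ ‖θ‖ ≤ r}

/-- Θ_r⁰ : dual lattice vectors of norm at most r (including 0). -/
def Theta0 (B : Basis (Fin d) ℝ (EuclideanSpace ℝ (Fin d))) (r : ℝ) :
    Set (EuclideanSpace ℝ (Fin d)) :=
  {θ | θ ∈ dualLattice B ∧ ‖θ‖ ≤ r}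

/-- A lattice r-subspace: a subspace spanned by dual lattice vectors from Θ_r⁰. -/
def IsLatticeSubspace (B : Basis (Fin d) ℝ (EuclideanSpace ℝ (Fin d))) (r : ℝ)
    (V : Submodule ℝ (EuclideanSpace ℝ (Fin d))) : Prop :=
  ∃ S : Set (EuclideanSpace ℝ (Fin d)), S ⊆ Theta0 B r ∧ V = Submodule.span ℝ S

/-- Orthogonal projection ξ_V onto a subspace, viewed in the ambient space. -/
def projV (V : Submodule ℝ (EuclideanSpace ℝ (Fin d))) (ξ : EuclideanSpace ℝ (Fin d)) :
    EuclideanSpace ℝ (Fin d) :=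
  (orthogonalProjection V ξ : EuclideanSpace ℝ (Fin d))

/-- ω_n: the volume of the unit ball in ℝ^n. -/
def unitBallVol (n : ℕ) : ℝ :=
  (MeasureTheory.volume (Metric.ball (0 : EuclideanSpace ℝ (Fin n)) 1)).toReal

/-- The resonant layer Λ(θ) (= ℝ^d when θ = 0). -/
def layer (ρ a : ℝ) (θ : EuclideanSpace ℝ (Fin d)) : Set (EuclideanSpace ℝ (Fin d)) :=
  {ξ | θ = 0 ∨ |⟪ξ, θ⟫| < ρ ^ a * ‖θ‖}

/-- Υ_θ(ξ): the points θ-resonant congruent to ξ. -/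
def upsTheta (ρ a : ℝ) (θ ξ : EuclideanSpace ℝ (Fin d)) : Set (EuclideanSpace ℝ (Fin d)) :=
  {η | ξ ∈ layer ρ a θ ∧ η ∈ layer ρ a θ ∧ ∃ l : ℤ, ξ - η = (l : ℝ) • θ}

/-- One step of resonant congruence (with some θ ∈ Θ_r⁰). -/
def resStep (B : Basis (Fin d) ℝ (EuclideanSpace ℝ (Fin d))) (ρ a r : ℝ)
    (ξ η : EuclideanSpace ℝ (Fin d)) : Prop :=
  ∃ θ ∈ Theta0 B r, η ∈ upsTheta ρ a θ ξ

/-- Υ(ξ): all points resonant congruent to ξ. -/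
def Ups (B : Basis (Fin d) ℝ (EuclideanSpace ℝ (Fin d))) (ρ a r : ℝ)
    (ξ : EuclideanSpace ℝ (Fin d)) : Set (EuclideanSpace ℝ (Fin d)) :=
  {η | Relation.ReflTransGen (resStep B ρ a r) ξ η}

/-- N(ξ) = Υ(ξ) − ξ. -/
def resN (B : Basis (Fin d) ℝ (EuclideanSpace ℝ (Fin d))) (ρ a r : ℝ)
    (ξ : EuclideanSpace ℝ (Fin d)) : Set (EuclideanSpace ℝ (Fin d)) :=
  {m | ξ + m ∈ Ups B ρ a r ξ}

/-- Ξ₁(V) = {ξ : |ξ_V| < ρ^{α_n}}, n = dim V. -/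
def Xi1 (ρ : ℝ) (α : ℕ → ℝ) (V : Submodule ℝ (EuclideanSpace ℝ (Fin d))) :
    Set (EuclideanSpace ℝ (Fin d)) :=
  {ξ | ‖projV V ξ‖ < ρ ^ α (Module.finrank ℝ V)}

/-- Ξ₂(V) = ∪_{ξ ∈ Ξ₁(V)} Υ(ξ). -/
def Xi2 (B : Basis (Fin d) ℝ (EuclideanSpace ℝ (Fin d))) (ρ r : ℝ) (α : ℕ → ℝ)
    (V : Submodule ℝ (EuclideanSpace ℝ (Fin d))) : Set (EuclideanSpace ℝ (Fin d)) :=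
  {η | ∃ ξ ∈ Xi1 ρ α V, η ∈ Ups B ρ (α 1) r ξ}

/-- Ξ(V): Ξ₂(V) minus the Ξ₂(W) for all lattice r-subspaces W of larger dimension. -/
def Xi (B : Basis (Fin d) ℝ (EuclideanSpace ℝ (Fin d))) (ρ r : ℝ) (α : ℕ → ℝ)
    (V : Submodule ℝ (EuclideanSpace ℝ (Fin d))) : Set (EuclideanSpace ℝ (Fin d)) :=
  Xi2 B ρ r α V \
    ⋃ W ∈ {W : Submodule ℝ (EuclideanSpace ℝ (Fin d)) |
        IsLatticeSubspace B r W ∧ Module.finrank ℝ V < Module.finrank ℝ W},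
      Xi2 B ρ r α W

/-- The standing conditions on the parameters ρ ≥ 1, r, κ > 0 and the exponents α_j:
0 = α₀, α_{n+1} > α_n + 2κd², α_d < 1, r ≤ ρ^κ, and r ≥ r₀ (i.e. Θ_r⁰ spans ℝ^d). -/
def GoodParams (B : Basis (Fin d) ℝ (EuclideanSpace ℝ (Fin d))) (ρ r κ : ℝ)
    (α : ℕ → ℝ) : Prop :=
  1 ≤ ρ ∧ 0 < κ ∧ α 0 = 0 ∧ (∀ n < d, α n + 2 * κ * (d : ℝ) ^ 2 < α (n + 1)) ∧
    α d < 1 ∧ r ≤ ρ ^ κ ∧ Submodule.span ℝ (Theta0 B r) = ⊤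

/-!
Since `Γ†` has a fixed covolume, Cramer's rule and Hadamard's inequality show that a vector almost
orthogonal to each of a set of `θ ∈ Θ_r⁰` has a projection to their span which is larger by a factor
of at most `K = O(ρ ^ (κ d))`. Consequently resonant chains along directions in an
`n`-dimensional lattice subspace `V` have diameter at most `(3K) ^ n ρ ^ α₁`, and stay close to
`Ξ₁(V)` when they start there.

If a chain from `ξ + tν` first left `ξ + tν + V` by a step along `θ ∉ V` at a point `η + tν`, then
`η + tν` would have a small projection to `W = V ⊕ ℝθ`. As moving along `ν` does not decrease this
projection, `η ∈ Υ(ξ)` would lie in `Ξ₁(W)`, which `ξ ∈ Ξ(V)` excludes. So `N(ξ + tν)` is reached by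
chains along directions in `V`, and these are invariant under translation by `V^⊥`.
-/

section Projection

variable {E : Type*} [NormedAddCommGroup E] [InnerProductSpace ℝ E]

lemma sub_starProjection_eq_of_sub_mem {V : Submodule ℝ E} [V.HasOrthogonalProjection] {x y : E}
    (h : x - y ∈ V) : x - V.starProjection x = y - V.starProjection y := by
  rw [sub_eq_sub_iff_sub_eq_sub, ← map_sub, starProjection_eq_self_iff.2 h]

lemma inner_starProjection_eq_of_mem {V : Submodule ℝ E} [V.HasOrthogonalProjection] {y : E}
    (hy : y ∈ V) (x : E) : ⟪V.starProjection x, y⟫ = ⟪x, y⟫ := by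
  rw [inner_starProjection_left_eq_right, starProjection_eq_self_iff.2 hy]

lemma abs_inner_le_norm_starProjection_mul {V : Submodule ℝ E} [V.HasOrthogonalProjection] {y : E}
    (hy : y ∈ V) (x : E) : |⟪x, y⟫| ≤ ‖V.starProjection x‖ * ‖y‖ := by
  rw [← inner_starProjection_eq_of_mem hy]
  exact abs_real_inner_le_norm _ _

lemma norm_starProjection_span_singleton_mul (θ x : E) :
    ‖(ℝ ∙ θ).starProjection x‖ * ‖θ‖ = |⟪x, θ⟫| := by
  rcases eq_or_ne θ 0 with rfl | hθ
  · simp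
  have hθ' : ‖θ‖ ≠ 0 := norm_ne_zero_iff.2 hθ
  rw [starProjection_singleton, norm_smul, norm_div, real_inner_comm, RCLike.ofReal_real_eq_id,
    id_eq, norm_pow, norm_norm, Real.norm_eq_abs]
  field_simp

lemma norm_starProjection_le_norm_starProjection_add_smul {V W : Submodule ℝ E}
    [V.HasOrthogonalProjection] [W.HasOrthogonalProjection] (hVW : V ≤ W) (x : E) {t : ℝ}
    (ht : 0 ≤ t) :
    ‖W.starProjection x‖ ≤ ‖W.starProjection (x + t • (x - V.starProjection x))‖ := by
  set y := x + t • (x - V.starProjection x) with hy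
  have hWV : W.starProjection (V.starProjection x) = V.starProjection x :=
    starProjection_eq_self_iff.2 (hVW (V.starProjection_apply_mem x))
  have hVy : V.starProjection y = V.starProjection x := by
    simp [hy, starProjection_eq_self_iff.2 (V.starProjection_apply_mem x)]
  have hVWy : ‖V.starProjection y‖ ≤ ‖W.starProjection y‖ := by
    rw [← starProjection_comp_starProjection_of_le hVW]
    exact V.norm_starProjection_apply_le _
  have hWx : (1 + t) • W.starProjection x = W.starProjection y + t • V.starProjection y := by
    rw [hVy, hy, map_add, map_smul, map_sub, hWV]
    module
  refine le_of_mul_le_mul_left ?_ (by positivity : 0 < 1 + t)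
  calc (1 + t) * ‖W.starProjection x‖ = ‖(1 + t) • W.starProjection x‖ := by
        rw [norm_smul, Real.norm_of_nonneg (by positivity)]
    _ ≤ ‖W.starProjection y‖ + t * ‖V.starProjection y‖ := by
        rw [hWx]
        refine (norm_add_le _ _).trans_eq ?_
        rw [norm_smul, Real.norm_of_nonneg ht]
    _ ≤ ‖W.starProjection y‖ + t * ‖W.starProjection y‖ := by gcongr
    _ = (1 + t) * ‖W.starProjection y‖ := by ring

end Projection

section Determinant

variable {E ι : Type*} [NormedAddCommGroup E] [InnerProductSpace ℝ E] [Fintype ι] [DecidableEq ι]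

lemma abs_det_le_prod_norm (b : OrthonormalBasis ι ℝ E) (v : ι → E) :
    |b.toBasis.det v| ≤ ∏ i, ‖v i‖ := by
  let σ := Fintype.equivFin ι
  have : Fact (finrank ℝ E = Fintype.card ι) := ⟨finrank_eq_card_basis b.toBasis⟩
  have h := (b.reindex σ).toBasis.orientation.abs_volumeForm_apply_le (v ∘ σ.symm)
  rw [Orientation.volumeForm_robust' _ (b.reindex σ), OrthonormalBasis.reindex_toBasis,
    Basis.det_reindex, Function.comp_assoc, Equiv.symm_comp_self, Function.comp_id] at h
  simpa only [Function.comp_apply, σ.symm.prod_comp fun i => ‖v i‖] using h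

lemma det_inner_eq_det_mul_det (b : OrthonormalBasis ι ℝ E) (v w : ι → E) :
    (Matrix.of fun i j => ⟪v i, w j⟫).det = b.toBasis.det v * b.toBasis.det w := by
  rw [Basis.det_apply, Basis.det_apply, ← Matrix.det_transpose (b.toBasis.toMatrix v),
    ← Matrix.det_mul]
  congr 1
  ext i j
  simp only [Matrix.of_apply, Matrix.mul_apply, Matrix.transpose_apply, Basis.toMatrix_apply,
    OrthonormalBasis.coe_toBasis_repr_apply, b.repr_apply_apply, real_inner_comm (v i)]
  exact (b.sum_inner_mul_inner (v i) (w j)).symm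

/-- Cramer's rule combined with Hadamard's inequality. -/
lemma abs_repr_mul_norm_mul_abs_det_le (b : OrthonormalBasis ι ℝ E) (e : Basis ι ℝ E) (w : E)
    (i : ι) : |e.repr w i| * ‖e i‖ * |b.toBasis.det e| ≤ ‖w‖ * ∏ j, ‖e j‖ := by
  have hcramer : b.toBasis.det (Function.update e i w) = e.repr w i * b.toBasis.det e := by
    have h := LinearMap.congr_fun
      (b.toBasis.det_smul_mk_coord_eq_det_update e.linearIndependent e.span_eq.ge i) w
    rw [Basis.eq_of_apply_eq fun j => Basis.mk_apply e.linearIndependent e.span_eq.ge j] at h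
    simpa [mul_comm] using h.symm
  have hprod : ‖e i‖ * ∏ j, ‖Function.update e i w j‖ = ‖w‖ * ∏ j, ‖e j‖ := by
    rw [← Finset.mul_prod_erase _ _ (Finset.mem_univ i),
      ← Finset.mul_prod_erase (a := i) _ (fun j => ‖e j‖) (Finset.mem_univ i),
      Function.update_self, mul_left_comm]
    congr 2
    exact Finset.prod_congr rfl fun j hj => by
      rw [Function.update_of_ne (Finset.ne_of_mem_erase hj)]
  calc |e.repr w i| * ‖e i‖ * |b.toBasis.det e|
      = ‖e i‖ * |b.toBasis.det (Function.update e i w)| := by rw [hcramer, abs_mul]; ring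
    _ ≤ ‖e i‖ * ∏ j, ‖Function.update e i w j‖ := by gcongr; exact abs_det_le_prod_norm b _
    _ = ‖w‖ * ∏ j, ‖e j‖ := hprod

lemma repr_mul_inner_mul_abs_det_le (b : OrthonormalBasis ι ℝ E) (e : Basis ι ℝ E) {s : Set ι}
    {x w : E} (hw : w ∈ span ℝ (e '' s)) {c : ℝ} (hc : 0 ≤ c)
    (hx : ∀ i ∈ s, |⟪x, e i⟫| ≤ c * ‖e i‖) (i : ι) :
    e.repr w i * ⟪x, e i⟫ * |b.toBasis.det e| ≤ ‖w‖ * (c * ∏ j, ‖e j‖) := by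
  by_cases hi : e.repr w i = 0
  · rw [hi, zero_mul, zero_mul]
    positivity
  have his : i ∈ s := e.mem_span_image.1 hw (by simpa using hi)
  calc e.repr w i * ⟪x, e i⟫ * |b.toBasis.det e|
      ≤ |e.repr w i| * |⟪x, e i⟫| * |b.toBasis.det e| := by
        rw [← abs_mul]
        gcongr
        exact le_abs_self _
    _ ≤ |e.repr w i| * (c * ‖e i‖) * |b.toBasis.det e| := by gcongr; exact hx i his
    _ = c * (|e.repr w i| * ‖e i‖ * |b.toBasis.det e|) := by ring
    _ ≤ c * (‖w‖ * ∏ j, ‖e j‖) := by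
        gcongr ?_ * ?_
        exact abs_repr_mul_norm_mul_abs_det_le b e w i
    _ = ‖w‖ * (c * ∏ j, ‖e j‖) := by ring

lemma norm_starProjection_span_image_mul_abs_det_le [FiniteDimensional ℝ E]
    (b : OrthonormalBasis ι ℝ E) (e : Basis ι ℝ E) (s : Set ι) {x : E} {c : ℝ} (hc : 0 ≤ c)
    (hx : ∀ i ∈ s, |⟪x, e i⟫| ≤ c * ‖e i‖) :
    ‖(span ℝ (e '' s)).starProjection x‖ * |b.toBasis.det e| ≤
      Fintype.card ι * c * ∏ i, ‖e i‖ := by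
  set w := (span ℝ (e '' s)).starProjection x
  have hwspan : w ∈ span ℝ (e '' s) := starProjection_apply_mem _ x
  have hwx : ‖w‖ * ‖w‖ = ∑ i, e.repr w i * ⟪x, e i⟫ := by
    calc ‖w‖ * ‖w‖ = ⟪w, w⟫ := (real_inner_self_eq_norm_mul_norm w).symm
      _ = ⟪x, w⟫ := inner_starProjection_eq_of_mem hwspan x
      _ = ∑ i, e.repr w i * ⟪x, e i⟫ := by
        conv_lhs => rw [← e.sum_repr w, inner_sum]
        simp only [real_inner_smul_right]
  have hterm (i : ι) : e.repr w i * ⟪x, e i⟫ * |b.toBasis.det e| ≤ ‖w‖ * (c * ∏ j, ‖e j‖) :=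
    repr_mul_inner_mul_abs_det_le b e hwspan hc hx i
  rcases (norm_nonneg w).eq_or_lt with hw0 | hwpos
  · rw [← hw0, zero_mul]
    positivity
  refine le_of_mul_le_mul_left ?_ hwpos
  calc ‖w‖ * (‖w‖ * |b.toBasis.det e|)
      = ∑ i, e.repr w i * ⟪x, e i⟫ * |b.toBasis.det e| := by
        rw [← mul_assoc, hwx, Finset.sum_mul]
    _ ≤ ∑ _i : ι, ‖w‖ * (c * ∏ j, ‖e j‖) := Finset.sum_le_sum fun i _ => hterm i
    _ = ‖w‖ * (Fintype.card ι * c * ∏ i, ‖e i‖) := by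
        rw [Finset.sum_const, Finset.card_univ, nsmul_eq_mul]
        ring

end Determinant

lemma exists_basis_mem_span_image_eq {K M ι : Type*} [DivisionRing K] [AddCommGroup M] [Module K M]
    (b : Basis ι K M) {S T : Set M} (hST : S ⊆ T) (hT : span K T = ⊤) :
    ∃ e : Basis ι K M, (∀ i, e i ∈ T) ∧ span K (e '' (e ⁻¹' S)) = span K S := by
  obtain ⟨s, hsS, hspan, hs⟩ := exists_linearIndependent K S
  replace hs : LinearIndepOn K id s := hs
  let e₀ := Basis.extendLe hs (hsS.trans hST) hT.ge
  have he₀ : Set.range e₀ ⊆ T := by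
    rw [Basis.coe_extendLe, Subtype.range_coe]
    exact LinearIndepOn.extend_subset _ _
  let e := e₀.reindex (e₀.indexEquiv b)
  have hrange : Set.range e = Set.range e₀ := Basis.range_reindex _ _
  refine ⟨e, fun i => he₀ (hrange ▸ Set.mem_range_self i), ?_⟩
  rw [Set.image_preimage_eq_inter_range, hrange]
  refine le_antisymm (span_mono Set.inter_subset_left) ?_
  rw [← hspan]
  exact span_mono (Set.subset_inter hsS (Basis.subset_extendLe _ _ _))

section DualLattice

/-- `K` bounds the loss in passing from almost orthogonality to each vector of a set `S ⊆ Θ` to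
almost orthogonality to the whole span of `S`. -/
def ProjectionBound {E : Type*} [NormedAddCommGroup E] [InnerProductSpace ℝ E]
    [FiniteDimensional ℝ E] (Θ : Set E) (K : ℝ) : Prop :=
  ∀ S ⊆ Θ, ∀ (x : E) (c : ℝ), 0 ≤ c → (∀ θ ∈ S, |⟪x, θ⟫| ≤ c * ‖θ‖) →
    ‖(span ℝ S).starProjection x‖ ≤ K * c

lemma ProjectionBound.mono {E : Type*} [NormedAddCommGroup E] [InnerProductSpace ℝ E]
    [FiniteDimensional ℝ E] {Θ Θ' : Set E} {K K' : ℝ} (h : ProjectionBound Θ K) (hΘ : Θ' ⊆ Θ)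
    (hK : K ≤ K') : ProjectionBound Θ' K' := fun S hS x c hc hx =>
  (h S (hS.trans hΘ) x c hc hx).trans (by gcongr)

variable (B : Basis (Fin d) ℝ (EuclideanSpace ℝ (Fin d)))

lemma exists_forall_span_Theta0_eq_top :
    ∃ L : ℝ, ∀ R ≥ L, span ℝ (Theta0 B R) = ⊤ := by
  let u (i : Fin d) : EuclideanSpace ℝ (Fin d) := (2 * Real.pi) •
    (InnerProductSpace.toDual ℝ _).symm (LinearMap.toContinuousLinearMap (B.coord i))
  have hu (i : Fin d) (x : EuclideanSpace ℝ (Fin d)) : ⟪u i, x⟫ = 2 * Real.pi * B.repr x i := by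
    simp [u, real_inner_smul_left, InnerProductSpace.toDual_symm_apply]
  refine ⟨∑ i, ‖u i‖, fun R hR => orthogonal_eq_bot_iff.1 ((Submodule.eq_bot_iff _).2 ?_)⟩
  have huΘ (i : Fin d) : u i ∈ Theta0 B R := by
    refine ⟨fun g hg => ?_, le_trans ?_ hR⟩
    · obtain ⟨k, hk⟩ := (B.mem_span_iff_repr_mem ℤ g).1 hg i
      exact ⟨k, by rw [hu, ← hk, eq_intCast]⟩
    · exact Finset.single_le_sum (f := fun i => ‖u i‖) (fun _ _ => norm_nonneg _)
        (Finset.mem_univ i)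
  intro x hx
  refine B.ext_elem fun i => ?_
  have hux : ⟪u i, x⟫ = 0 := hx _ (subset_span (huΘ i))
  simpa [hu, Real.pi_ne_zero] using hux

variable {B}

/-- The determinant of the sublattice of `Γ†` spanned by `θ` is a nonzero multiple of
`d(Γ†) = (2π)ᵈ / d(Γ)`. -/
lemma two_pi_pow_le_abs_det_mul_latDet (θ : Basis (Fin d) ℝ (EuclideanSpace ℝ (Fin d)))
    (hθ : ∀ i, θ i ∈ dualLattice B) :
    (2 * Real.pi) ^ d ≤ |(EuclideanSpace.basisFun (Fin d) ℝ).toBasis.det θ| * latDet B := by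
  choose k hk using fun i j => hθ i (B j) (subset_span ⟨j, rfl⟩)
  have hdet : (EuclideanSpace.basisFun (Fin d) ℝ).toBasis.det θ *
      (EuclideanSpace.basisFun (Fin d) ℝ).toBasis.det B =
      (2 * Real.pi) ^ d * ((Matrix.of k).det : ℤ) := by
    have hsmul : (Matrix.of fun i j => ⟪θ i, B j⟫) =
        (2 * Real.pi) • (Matrix.of k).map (Int.cast : ℤ → ℝ) := by
      ext i j
      simp [hk]
    rw [← det_inner_eq_det_mul_det, hsmul, Matrix.det_smul, Fintype.card_fin, Int.cast_det]
  have hk0 : (Matrix.of k).det ≠ 0 := by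
    intro h0
    have hne := mul_ne_zero
      ((EuclideanSpace.basisFun (Fin d) ℝ).toBasis.isUnit_det θ).ne_zero
      ((EuclideanSpace.basisFun (Fin d) ℝ).toBasis.isUnit_det B).ne_zero
    exact hne (by rw [hdet, h0, Int.cast_zero, mul_zero])
  have hk1 : (1 : ℝ) ≤ |((Matrix.of k).det : ℝ)| := by exact_mod_cast Int.one_le_abs hk0
  rw [latDet, ← abs_mul, hdet, abs_mul, abs_of_pos (by positivity)]
  exact le_mul_of_one_le_right (by positivity) hk1

lemma projectionBound_Theta0 {R : ℝ} (hspan : span ℝ (Theta0 B R) = ⊤) :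
    ProjectionBound (Theta0 B R) (d * latDet B / (2 * Real.pi) ^ d * R ^ d) := by
  intro S hS x c hc hx
  obtain ⟨e, heΘ, heS⟩ := exists_basis_mem_span_image_eq B hS hspan
  have hprod : ∏ i, ‖e i‖ ≤ R ^ d := by
    have := Finset.prod_le_prod (s := Finset.univ) (fun i _ => norm_nonneg (e i))
      fun i _ => (heΘ i).2
    rwa [Finset.prod_const, Finset.card_univ, Fintype.card_fin] at this
  have hlat : 0 ≤ latDet B := abs_nonneg _
  have hdet := norm_starProjection_span_image_mul_abs_det_le
    (EuclideanSpace.basisFun (Fin d) ℝ) e (e ⁻¹' S) hc fun i hi => hx _ hi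
  rw [heS, Fintype.card_fin] at hdet
  set p := ‖(span ℝ S).starProjection x‖
  have hbound : p * (2 * Real.pi) ^ d ≤ d * c * R ^ d * latDet B :=
    calc p * (2 * Real.pi) ^ d
        ≤ p * (|(EuclideanSpace.basisFun (Fin d) ℝ).toBasis.det e| * latDet B) := by
          gcongr
          exact two_pi_pow_le_abs_det_mul_latDet e fun i => (heΘ i).1
      _ = p * |(EuclideanSpace.basisFun (Fin d) ℝ).toBasis.det e| * latDet B := by ring
      _ ≤ d * c * (∏ i, ‖e i‖) * latDet B := by gcongr
      _ ≤ d * c * R ^ d * latDet B := by gcongr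
  calc p ≤ d * c * R ^ d * latDet B / (2 * Real.pi) ^ d :=
        (le_div_iff₀ (by positivity)).2 hbound
    _ = d * latDet B / (2 * Real.pi) ^ d * R ^ d * c := by ring

end DualLattice

section Chains

/-- One step of resonant congruence along a direction `θ ∈ Θ`; `resStep` is the case `Θ = Θ_r⁰`. -/
def ResStepAlong (ρ a : ℝ) (Θ : Set (EuclideanSpace ℝ (Fin d)))
    (ξ η : EuclideanSpace ℝ (Fin d)) : Prop :=
  ∃ θ ∈ Θ, η ∈ upsTheta ρ a θ ξ

/-- Resonant congruence by a chain of steps along directions in `Θ`; `η ∈ Υ(ξ)` is the case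
`Θ = Θ_r⁰`. -/
def ResChain (ρ a : ℝ) (Θ : Set (EuclideanSpace ℝ (Fin d))) :
    EuclideanSpace ℝ (Fin d) → EuclideanSpace ℝ (Fin d) → Prop :=
  ReflTransGen (ResStepAlong ρ a Θ)

variable {ρ a K : ℝ} {Θ Θ' : Set (EuclideanSpace ℝ (Fin d))}
  {ξ η ζ ν θ : EuclideanSpace ℝ (Fin d)}

lemma abs_inner_le_of_mem_layer (hη : η ∈ layer ρ a θ) :
    |⟪ξ, θ⟫| ≤ (‖ξ - η‖ + ρ ^ a) * ‖θ‖ := by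
  have hηθ : |⟪η, θ⟫| ≤ ρ ^ a * ‖θ‖ := by
    rcases hη with rfl | hη
    · simp
    · exact hη.le
  calc |⟪ξ, θ⟫| = |⟪ξ - η, θ⟫ + ⟪η, θ⟫| := by rw [← inner_add_left, sub_add_cancel]
    _ ≤ |⟪ξ - η, θ⟫| + |⟪η, θ⟫| := abs_add_le _ _
    _ ≤ ‖ξ - η‖ * ‖θ‖ + ρ ^ a * ‖θ‖ := add_le_add (abs_real_inner_le_norm _ _) hηθ
    _ = (‖ξ - η‖ + ρ ^ a) * ‖θ‖ := by ring

lemma add_mem_layer_of_inner_eq_zero (hν : ⟪ν, θ⟫ = 0) (hξ : ξ ∈ layer ρ a θ) :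
    ξ + ν ∈ layer ρ a θ :=
  hξ.imp_right fun h => by rwa [inner_add_left, hν, add_zero]

lemma ResStepAlong.symm (h : ResStepAlong ρ a Θ ξ η) : ResStepAlong ρ a Θ η ξ := by
  obtain ⟨θ, hθ, hξ, hη, l, hl⟩ := h
  exact ⟨θ, hθ, hη, hξ, -l, by rw [← neg_sub, hl, Int.cast_neg, neg_smul]⟩

lemma ResStepAlong.add_of_inner_eq_zero (hν : ∀ θ ∈ Θ, ⟪ν, θ⟫ = 0)
    (h : ResStepAlong ρ a Θ ξ η) : ResStepAlong ρ a Θ (ξ + ν) (η + ν) := by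
  obtain ⟨θ, hθ, hξ, hη, l, hl⟩ := h
  exact ⟨θ, hθ, add_mem_layer_of_inner_eq_zero (hν θ hθ) hξ,
    add_mem_layer_of_inner_eq_zero (hν θ hθ) hη, l, by rw [add_sub_add_right_eq_sub, hl]⟩

namespace ResChain

lemma trans (h₁ : ResChain ρ a Θ ξ η) (h₂ : ResChain ρ a Θ η ζ) : ResChain ρ a Θ ξ ζ :=
  ReflTransGen.trans h₁ h₂

lemma symm (h : ResChain ρ a Θ ξ η) : ResChain ρ a Θ η ξ :=
  have : Std.Symm (ResStepAlong ρ a Θ) := ⟨fun _ _ => ResStepAlong.symm⟩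
  ReflTransGen.stdSymm.symm _ _ h

lemma mono (hΘ : Θ ⊆ Θ') (h : ResChain ρ a Θ ξ η) : ResChain ρ a Θ' ξ η :=
  ReflTransGen.mono (fun _ _ ⟨θ, hθ, h⟩ => ⟨θ, hΘ hθ, h⟩) _ _ h

lemma add_of_inner_eq_zero (hν : ∀ θ ∈ Θ, ⟪ν, θ⟫ = 0) (h : ResChain ρ a Θ ξ η) :
    ResChain ρ a Θ (ξ + ν) (η + ν) :=
  ReflTransGen.lift (· + ν) (fun _ _ => ResStepAlong.add_of_inner_eq_zero hν) _ _ h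

lemma sub_mem_span (h : ResChain ρ a Θ ξ η) : ξ - η ∈ span ℝ Θ := by
  induction h with
  | refl => simp
  | @tail x y _ hxy ih =>
    obtain ⟨θ, hθ, -, -, l, hl⟩ := hxy
    rw [← sub_add_sub_cancel ξ x y, hl]
    exact add_mem ih (smul_mem _ _ (subset_span hθ))

lemma norm_sub_le_norm_starProjection_add (h : ResChain ρ a Θ ξ η) :
    ‖ξ - η‖ ≤ ‖(span ℝ Θ).starProjection ξ‖ + ‖(span ℝ Θ).starProjection η‖ := by
  rw [← starProjection_eq_self_iff.2 h.sub_mem_span, map_sub]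
  exact norm_sub_le _ _

lemma restrict (h : ResChain ρ a Θ ξ η)
    (hΘ' : ∀ ζ, ResChain ρ a Θ' ξ ζ → ∀ θ ∈ Θ, ζ ∈ layer ρ a θ → θ ∈ Θ') :
    ResChain ρ a Θ' ξ η := by
  induction h with
  | refl => exact .refl
  | @tail x y _ hxy ih =>
    obtain ⟨θ, hθ, hxy⟩ := hxy
    exact .tail ih ⟨θ, hΘ' x ih θ hθ hxy.1, hxy⟩

/-- Consider the directions `θ ∈ Θ` almost orthogonal to the starting point. If they span a smaller
space, then by induction chains along them are too short to meet the layer of any other direction.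
Otherwise both endpoints have small projections to the span of `Θ`, which contains their
difference. -/
theorem norm_sub_add_rpow_le (hρ : 0 ≤ ρ) (hK : 1 ≤ K) (hΘ : ProjectionBound Θ K) {m : ℕ}
    (hm : finrank ℝ (span ℝ Θ) ≤ m) (h : ResChain ρ a Θ ξ η) :
    ‖ξ - η‖ + ρ ^ a ≤ (3 * K) ^ m * ρ ^ a := by
  have hρa : 0 ≤ ρ ^ a := Real.rpow_nonneg hρ a
  induction m generalizing Θ ξ η with
  | zero =>
    have hsub := h.sub_mem_span
    rw [finrank_eq_zero.1 (Nat.le_zero.1 hm), mem_bot] at hsub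
    simp [hsub]
  | succ m ih =>
    set b := (3 * K) ^ m * ρ ^ a with hb
    have hρb : ρ ^ a ≤ b := le_mul_of_one_le_left hρa (one_le_pow₀ (by linarith))
    have hbK : b ≤ K * b := le_mul_of_one_le_left (hρa.trans hρb) hK
    have hgoal : (3 * K) ^ (m + 1) * ρ ^ a = 3 * (K * b) := by rw [hb]; ring
    have dichotomy {x y : EuclideanSpace ℝ (Fin d)} (hxy : ResChain ρ a Θ x y) :
        ‖x - y‖ + ρ ^ a ≤ b ∨ ‖(span ℝ Θ).starProjection x‖ ≤ K * b := by
      let T := {θ ∈ Θ | |⟪x, θ⟫| ≤ b * ‖θ‖}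
      have hTΘ : T ⊆ Θ := Set.sep_subset _ _
      have hT : ProjectionBound T K := hΘ.mono hTΘ le_rfl
      by_cases hdim : finrank ℝ (span ℝ T) ≤ m
      · refine .inl (ih hT hdim (hxy.restrict fun z hxz θ hθ hz => ⟨hθ, ?_⟩))
        exact (abs_inner_le_of_mem_layer hz).trans (by gcongr; exact ih hT hdim hxz)
      · have hspan : span ℝ T = span ℝ Θ :=
          eq_of_le_of_finrank_le (span_mono hTΘ) (by omega)
        rw [← hspan]
        exact .inr (hT T le_rfl x b (hρa.trans hρb) fun θ hθ => hθ.2)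
    rw [hgoal]
    rcases dichotomy h with hshort | hξ
    · linarith
    rcases dichotomy h.symm with hshort | hη
    · rw [norm_sub_rev]
      linarith
    linarith [h.norm_sub_le_norm_starProjection_add]

end ResChain

end Chains

section Scales

/-- The inequalities that `ρ` must satisfy for the resonant regions to separate: the scale
`ρ ^ α (n + 1)` dominates the extent `(3K) ^ (n + 1) ρ ^ α n` of the resonant chains that a
subspace of dimension `n` gives rise to. -/
structure SeparatedScales (B : Basis (Fin d) ℝ (EuclideanSpace ℝ (Fin d))) (ρ r : ℝ) (α : ℕ → ℝ)
    (K : ℝ) : Prop where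
  rho_pos : 0 < ρ
  one_le : 1 ≤ K
  projectionBound : ProjectionBound (Theta0 B r) K
  gap : ∀ n < d, (3 * K) ^ (n + 1) * ρ ^ α n < ρ ^ α (n + 1)

lemma eventually_const_mul_rpow_lt_rpow (c : ℝ) {p q : ℝ} (hpq : p < q) :
    ∀ᶠ ρ : ℝ in Filter.atTop, c * ρ ^ p < ρ ^ q := by
  filter_upwards [(tendsto_rpow_atTop (sub_pos.2 hpq)).eventually_gt_atTop c,
    Filter.eventually_gt_atTop 0] with ρ hc hρ
  calc c * ρ ^ p < ρ ^ (q - p) * ρ ^ p := by gcongr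
    _ = ρ ^ q := by rw [← Real.rpow_add hρ, sub_add_cancel]

lemma eventually_gap_rpow {κ : ℝ} (hκ : 0 ≤ κ) {α : ℕ → ℝ}
    (hα : ∀ n < d, α n + κ * (d : ℝ) ^ 2 < α (n + 1)) {C : ℝ} (hC : 1 ≤ C) :
    ∀ᶠ ρ : ℝ in Filter.atTop, ∀ n < d,
      (3 * (C * (ρ ^ κ) ^ d)) ^ (n + 1) * ρ ^ α n < ρ ^ α (n + 1) := by
  have hscales : ∀ᶠ ρ : ℝ in Filter.atTop, ∀ n ∈ Finset.range d,
      (3 * C) ^ d * ρ ^ (α n + κ * (d : ℝ) ^ 2) < ρ ^ α (n + 1) :=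
    (Filter.eventually_all_finset _).2 fun n hn =>
      eventually_const_mul_rpow_lt_rpow _ (hα n (Finset.mem_range.1 hn))
  filter_upwards [hscales, Filter.eventually_ge_atTop 1] with ρ hscale hρ n hn
  have hρ0 : 0 < ρ := by linarith
  have hK : 1 ≤ C * (ρ ^ κ) ^ d :=
    one_le_mul_of_one_le_of_one_le hC (one_le_pow₀ (Real.one_le_rpow hρ hκ))
  have hpow : (ρ ^ κ) ^ (d * d) = ρ ^ (κ * (d : ℝ) ^ 2) := by
    rw [← Real.rpow_natCast, ← Real.rpow_mul hρ0.le, Nat.cast_mul, sq]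
  calc (3 * (C * (ρ ^ κ) ^ d)) ^ (n + 1) * ρ ^ α n
      ≤ (3 * (C * (ρ ^ κ) ^ d)) ^ d * ρ ^ α n := by
        gcongr
        · linarith
        · omega
    _ = (3 * C) ^ d * ((ρ ^ κ) ^ (d * d) * ρ ^ α n) := by
        rw [pow_mul]
        ring
    _ = (3 * C) ^ d * ρ ^ (α n + κ * (d : ℝ) ^ 2) := by
        rw [hpow, ← Real.rpow_add hρ0, add_comm]
    _ < ρ ^ α (n + 1) := hscale n (Finset.mem_range.2 hn)

lemma eventually_exists_separatedScales (B : Basis (Fin d) ℝ (EuclideanSpace ℝ (Fin d))) {κ : ℝ}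
    (hκ : 0 ≤ κ) {α : ℕ → ℝ} (hα : ∀ n < d, α n + κ * (d : ℝ) ^ 2 < α (n + 1)) :
    ∀ᶠ ρ : ℝ in Filter.atTop, ∀ r ≤ ρ ^ κ, ∃ K, SeparatedScales B ρ r α K := by
  obtain ⟨L₀, hL₀⟩ := exists_forall_span_Theta0_eq_top B
  set L := max 1 L₀
  set C := max 1 (d * latDet B / (2 * Real.pi) ^ d)
  have hL : 1 ≤ L := le_max_left _ _
  have hCL : 1 ≤ C * L ^ d := one_le_mul_of_one_le_of_one_le (le_max_left _ _) (one_le_pow₀ hL)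
  filter_upwards [eventually_gap_rpow hκ hα hCL, Filter.eventually_ge_atTop 1] with ρ hgap hρ r hr
  have hρκ : 1 ≤ ρ ^ κ := Real.one_le_rpow hρ hκ
  have hL₀ρ : L₀ ≤ L * ρ ^ κ :=
    (le_max_right _ _).trans (le_mul_of_one_le_right (by linarith) hρκ)
  refine ⟨C * L ^ d * (ρ ^ κ) ^ d, by linarith,
    one_le_mul_of_one_le_of_one_le hCL (one_le_pow₀ hρκ), ?_, hgap⟩
  refine (projectionBound_Theta0 (hL₀ _ hL₀ρ)).mono
    (fun θ hθ => ⟨hθ.1, hθ.2.trans (hr.trans ?_)⟩) ?_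
  · exact le_mul_of_one_le_left (by linarith) hL
  · rw [mul_assoc, ← mul_pow]
    gcongr
    exact le_max_right _ _

lemma SeparatedScales.rpow_one_le {B : Basis (Fin d) ℝ (EuclideanSpace ℝ (Fin d))} {ρ r K : ℝ}
    {α : ℕ → ℝ} (hs : SeparatedScales B ρ r α K) {n : ℕ} (hn : 1 ≤ n) (hnd : n ≤ d) :
    ρ ^ α 1 ≤ ρ ^ α n := by
  induction n, hn using Nat.le_induction with
  | base => exact le_rfl
  | succ n _ ih =>
    have hK : 1 ≤ (3 * K) ^ (n + 1) := one_le_pow₀ (by linarith [hs.one_le])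
    calc ρ ^ α 1 ≤ ρ ^ α n := ih (by omega)
      _ ≤ (3 * K) ^ (n + 1) * ρ ^ α n :=
        le_mul_of_one_le_left (Real.rpow_nonneg hs.rho_pos.le _) hK
      _ ≤ ρ ^ α (n + 1) := (hs.gap n (by omega)).le

end Scales

section Regions

variable {B : Basis (Fin d) ℝ (EuclideanSpace ℝ (Fin d))} {ρ r a t K : ℝ} {α : ℕ → ℝ}
  {V W : Submodule ℝ (EuclideanSpace ℝ (Fin d))} {ξ ξ₀ η θ : EuclideanSpace ℝ (Fin d)}

lemma projV_eq_starProjection (V : Submodule ℝ (EuclideanSpace ℝ (Fin d)))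
    (ξ : EuclideanSpace ℝ (Fin d)) : projV V ξ = V.starProjection ξ := rfl

lemma IsLatticeSubspace.span_inter_eq (hV : IsLatticeSubspace B r V) :
    span ℝ (Theta0 B r ∩ V) = V := by
  obtain ⟨S, hS, rfl⟩ := hV
  exact le_antisymm (span_le.2 Set.inter_subset_right)
    (span_mono (Set.subset_inter hS subset_span))

lemma IsLatticeSubspace.sup_span_singleton (hV : IsLatticeSubspace B r V)
    (hθ : θ ∈ Theta0 B r) : IsLatticeSubspace B r (V ⊔ ℝ ∙ θ) := by
  obtain ⟨S, hS, rfl⟩ := hV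
  exact ⟨S ∪ {θ}, Set.union_subset hS (Set.singleton_subset_iff.2 hθ), (span_union S {θ}).symm⟩

lemma ResChain.sub_mem (h : ResChain ρ a (Theta0 B r ∩ V) ξ η) : ξ - η ∈ V :=
  span_le.2 Set.inter_subset_right h.sub_mem_span

lemma ResChain.mem_Ups {Θ : Set (EuclideanSpace ℝ (Fin d))}
    (h : ResChain ρ a (Theta0 B r ∩ Θ) ξ η) : η ∈ Ups B ρ a r ξ :=
  h.mono Set.inter_subset_left

lemma notMem_Xi1_of_mem_Xi (hξ : ξ ∈ Xi B ρ r α V) (hW : IsLatticeSubspace B r W)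
    (hVW : finrank ℝ V < finrank ℝ W) (hη : η ∈ Ups B ρ (α 1) r ξ) : η ∉ Xi1 ρ α W :=
  fun hηW => hξ.2 (Set.mem_biUnion (x := W) ⟨hW, hVW⟩
    ⟨η, hηW, ResChain.symm (Θ := Theta0 B r) hη⟩)

namespace SeparatedScales

lemma norm_starProjection_le_of_resChain (hs : SeparatedScales B ρ r α K)
    (hV : V ≠ ⊥) (hξ₀ : ξ₀ ∈ Xi1 ρ α V) (h : ResChain ρ (α 1) (Theta0 B r ∩ V) ξ₀ ξ) :
    ‖V.starProjection ξ‖ ≤ (3 * K) ^ finrank ℝ V * ρ ^ α (finrank ℝ V) := by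
  set n := finrank ℝ V
  have hn0 : 1 ≤ n := Submodule.one_le_finrank_iff.2 hV
  have hnd : n ≤ d := by simpa using V.finrank_le
  have hK : 1 ≤ (3 * K) ^ n := one_le_pow₀ (by linarith [hs.one_le])
  have hspan : span ℝ (Theta0 B r ∩ (V : Set (EuclideanSpace ℝ (Fin d)))) ≤ V :=
    span_le.2 Set.inter_subset_right
  have hdiam : ‖ξ₀ - ξ‖ ≤ ((3 * K) ^ n - 1) * ρ ^ α 1 := by
    have := h.norm_sub_add_rpow_le hs.rho_pos.le hs.one_le
      (hs.projectionBound.mono Set.inter_subset_left le_rfl) (finrank_mono hspan)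
    linarith
  have hξ₀' : ‖V.starProjection ξ₀‖ ≤ ρ ^ α n := le_of_lt hξ₀
  calc ‖V.starProjection ξ‖ = ‖V.starProjection ξ₀ - V.starProjection (ξ₀ - ξ)‖ := by
        rw [map_sub, sub_sub_cancel]
    _ ≤ ‖V.starProjection ξ₀‖ + ‖V.starProjection (ξ₀ - ξ)‖ := norm_sub_le _ _
    _ ≤ ρ ^ α n + ((3 * K) ^ n - 1) * ρ ^ α n := by
        gcongr
        refine (V.norm_starProjection_apply_le _).trans (hdiam.trans ?_)
        exact mul_le_mul_of_nonneg_left (hs.rpow_one_le hn0 hnd) (by linarith)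
    _ = (3 * K) ^ n * ρ ^ α n := by ring

lemma norm_starProjection_sup_span_singleton_lt (hs : SeparatedScales B ρ r α K)
    (hV : IsLatticeSubspace B r V) (hθ : θ ∈ Theta0 B r) (hθV : θ ∉ V)
    (hηV : V ≠ ⊥ → ‖V.starProjection η‖ ≤ (3 * K) ^ finrank ℝ V * ρ ^ α (finrank ℝ V))
    (hηθ : η ∈ layer ρ (α 1) θ) :
    ‖(V ⊔ ℝ ∙ θ).starProjection η‖ < ρ ^ α (finrank ℝ V + 1) := by
  have hθ0 : θ ≠ 0 := fun h => hθV (h ▸ V.zero_mem)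
  rcases eq_or_ne V ⊥ with rfl | hV0
  · simp only [bot_sup_eq, finrank_bot, zero_add]
    refine lt_of_mul_lt_mul_right ?_ (norm_nonneg θ)
    rw [norm_starProjection_span_singleton_mul]
    exact hηθ.resolve_left hθ0
  set n := finrank ℝ V
  have hn0 : 1 ≤ n := Submodule.one_le_finrank_iff.2 hV0
  have hnd : n < d := by
    simpa using finrank_lt (s := V) (fun h => hθV (h ▸ mem_top))
  have hρn : 0 ≤ ρ ^ α n := Real.rpow_nonneg hs.rho_pos.le _
  have hK : 1 ≤ (3 * K) ^ n := one_le_pow₀ (by linarith [hs.one_le])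
  have hKρ : ρ ^ α n ≤ (3 * K) ^ n * ρ ^ α n := le_mul_of_one_le_left hρn hK
  have hdirections : ∀ φ ∈ (Theta0 B r ∩ V) ∪ {θ},
      |⟪η, φ⟫| ≤ (3 * K) ^ n * ρ ^ α n * ‖φ‖ := by
    rintro φ (⟨-, hφ⟩ | rfl)
    · exact (abs_inner_le_norm_starProjection_mul hφ η).trans (by gcongr; exact hηV hV0)
    · refine (abs_inner_le_of_mem_layer hηθ).trans ?_
      rw [sub_self, norm_zero, zero_add]
      gcongr
      exact (hs.rpow_one_le hn0 hnd.le).trans hKρ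
  have hspan : span ℝ ((Theta0 B r ∩ V) ∪ {θ}) = V ⊔ ℝ ∙ θ := by
    rw [span_union, hV.span_inter_eq]
  calc ‖(V ⊔ ℝ ∙ θ).starProjection η‖
      = ‖(span ℝ ((Theta0 B r ∩ V) ∪ {θ})).starProjection η‖ := by rw [hspan]
    _ ≤ K * ((3 * K) ^ n * ρ ^ α n) := hs.projectionBound _
        (Set.union_subset Set.inter_subset_left (Set.singleton_subset_iff.2 hθ)) η _
        (hρn.trans hKρ) hdirections
    _ ≤ 3 * K * ((3 * K) ^ n * ρ ^ α n) := by
        gcongr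
        linarith [hs.one_le]
    _ = (3 * K) ^ (n + 1) * ρ ^ α n := by ring
    _ < ρ ^ α (n + 1) := hs.gap n hnd

/-- Were `θ ∉ V`, the point `η` itself would be resonant with respect to the larger subspace
`V ⊕ ℝθ`, since moving along `V^⊥` does not decrease projections to it. -/
lemma mem_of_add_smul_mem_layer (hs : SeparatedScales B ρ r α K) (hV : IsLatticeSubspace B r V)
    (hξ : ξ ∈ Xi B ρ r α V) (hη : η ∈ Ups B ρ (α 1) r ξ) (hξ₀ : ξ₀ ∈ Xi1 ρ α V)
    (hξ₀η : ResChain ρ (α 1) (Theta0 B r ∩ V) ξ₀ η) (ht : 0 ≤ t) (hθ : θ ∈ Theta0 B r)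
    (hηθ : η + t • (η - projV V η) ∈ layer ρ (α 1) θ) : θ ∈ V := by
  by_contra hθV
  set η' := η + t • (η - projV V η) with hη'
  have hproj : V.starProjection η' = V.starProjection η := by
    simp [hη', projV_eq_starProjection,
      starProjection_eq_self_iff.2 (V.starProjection_apply_mem η)]
  have hdim := finrank_sup_span_singleton hθV
  refine notMem_Xi1_of_mem_Xi hξ (hV.sup_span_singleton hθ) (hdim ▸ Nat.lt_succ_self _) hη ?_
  change ‖(V ⊔ ℝ ∙ θ).starProjection η‖ < ρ ^ α (finrank ℝ ↥(V ⊔ ℝ ∙ θ))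
  rw [hdim]
  calc ‖(V ⊔ ℝ ∙ θ).starProjection η‖ ≤ ‖(V ⊔ ℝ ∙ θ).starProjection η'‖ :=
        norm_starProjection_le_norm_starProjection_add_smul le_sup_left η ht
    _ < ρ ^ α (finrank ℝ V + 1) := hs.norm_starProjection_sup_span_singleton_lt hV hθ hθV
        (fun hV0 => hproj ▸ hs.norm_starProjection_le_of_resChain hV0 hξ₀ hξ₀η) hηθ

lemma exists_mem_Xi1_resChain (hs : SeparatedScales B ρ r α K) (hV : IsLatticeSubspace B r V)
    (hξ : ξ ∈ Xi B ρ r α V) :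
    ∃ ξ₀ ∈ Xi1 ρ α V, ResChain ρ (α 1) (Theta0 B r ∩ V) ξ₀ ξ := by
  obtain ⟨ξ₀, hξ₀, hξ₀ξ⟩ := hξ.1
  replace hξ₀ξ : ResChain ρ (α 1) (Theta0 B r) ξ₀ ξ := hξ₀ξ
  refine ⟨ξ₀, hξ₀, hξ₀ξ.restrict fun η hη θ hθ hηθ => ⟨hθ, ?_⟩⟩
  exact hs.mem_of_add_smul_mem_layer hV hξ (hξ₀ξ.symm.trans hη.mem_Ups) hξ₀ hη le_rfl hθ
    (by rwa [zero_smul, add_zero])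

end SeparatedScales

/-- The part of `N(ξ)` reached by resonant chains along directions in `V`. -/
def resNAlong (B : Basis (Fin d) ℝ (EuclideanSpace ℝ (Fin d))) (ρ a r : ℝ)
    (V : Submodule ℝ (EuclideanSpace ℝ (Fin d))) (ξ : EuclideanSpace ℝ (Fin d)) :
    Set (EuclideanSpace ℝ (Fin d)) :=
  {m | ResChain ρ a (Theta0 B r ∩ V) ξ (ξ + m)}

lemma resNAlong_subset : resNAlong B ρ a r V ξ ⊆ V := fun m hm => by
  simpa using ResChain.sub_mem hm

lemma resNAlong_add_of_mem_orthogonal {ν : EuclideanSpace ℝ (Fin d)} (hν : ν ∈ Vᗮ) :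
    resNAlong B ρ a r V (ξ + ν) = resNAlong B ρ a r V ξ := by
  have hshift {x ν : EuclideanSpace ℝ (Fin d)} (hν : ν ∈ Vᗮ) :
      resNAlong B ρ a r V x ⊆ resNAlong B ρ a r V (x + ν) := fun m hm => by
    have := ResChain.add_of_inner_eq_zero (fun θ hθ => inner_left_of_mem_orthogonal hθ.2 hν) hm
    rwa [add_right_comm] at this
  refine Set.Subset.antisymm ?_ (hshift hν)
  simpa using hshift (x := ξ + ν) (neg_mem hν)

lemma SeparatedScales.resN_add_smul_eq_resNAlong (hs : SeparatedScales B ρ r α K)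
    (hV : IsLatticeSubspace B r V) (hξ : ξ ∈ Xi B ρ r α V) (ht : 0 ≤ t) :
    resN B ρ (α 1) r (ξ + t • (ξ - projV V ξ)) = resNAlong B ρ (α 1) r V ξ := by
  obtain ⟨ξ₀, hξ₀, hξ₀ξ⟩ := hs.exists_mem_Xi1_resChain hV hξ
  set ν := ξ - projV V ξ
  have hνV : t • ν ∈ Vᗮ := smul_mem _ _ (V.sub_starProjection_mem_orthogonal ξ)
  rw [← resNAlong_add_of_mem_orthogonal hνV]
  refine Set.Subset.antisymm (fun m hm => ?_) fun m hm => ResChain.mem_Ups hm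
  refine ResChain.restrict (Θ := Theta0 B r) hm fun ζ hζ θ hθ hζθ => ⟨hθ, ?_⟩
  have hξζ : ResChain ρ (α 1) (Theta0 B r ∩ V) ξ (ζ - t • ν) := by
    simpa [sub_eq_add_neg] using hζ.add_of_inner_eq_zero
      fun φ hφ => inner_left_of_mem_orthogonal hφ.2 (neg_mem hνV)
  refine hs.mem_of_add_smul_mem_layer hV hξ hξζ.mem_Ups hξ₀ (hξ₀ξ.trans hξζ) ht hθ ?_
  have hνζ : ζ - t • ν - projV V (ζ - t • ν) = ν :=
    (sub_starProjection_eq_of_sub_mem hξζ.sub_mem).symm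
  rwa [hνζ, sub_add_cancel]

end Regions

theorem resN_constant_along_perp_ray_general (B : Basis (Fin d) ℝ (EuclideanSpace ℝ (Fin d)))
    {κ : ℝ} (hκ : 0 ≤ κ) {α : ℕ → ℝ} (hα : ∀ n < d, α n + κ * (d : ℝ) ^ 2 < α (n + 1)) :
    ∃ ρ₀ : ℝ, ∀ ρ ≥ ρ₀, ∀ r ≤ ρ ^ κ, ∀ V, IsLatticeSubspace B r V → ∀ ξ ∈ Xi B ρ r α V,
      ∀ t : ℝ, 0 ≤ t →
        resN B ρ (α 1) r (ξ + t • (ξ - projV V ξ)) = resN B ρ (α 1) r ξ ∧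
        resN B ρ (α 1) r (ξ + t • (ξ - projV V ξ)) ⊆ V := by
  obtain ⟨ρ₀, hρ₀⟩ := Filter.eventually_atTop.1 (eventually_exists_separatedScales B hκ hα)
  refine ⟨ρ₀, fun ρ hρ r hr V hV ξ hξ t ht => ?_⟩
  obtain ⟨K, hs⟩ := hρ₀ ρ hρ r hr
  have hray := hs.resN_add_smul_eq_resNAlong hV hξ ht
  have hbase := hs.resN_add_smul_eq_resNAlong hV hξ le_rfl
  rw [zero_smul, add_zero] at hbase
  exact ⟨hray.trans hbase.symm, hray ▸ resNAlong_subset⟩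

/-- Lemma 5.21: for sufficiently large ρ, if ξ ∈ Ξ(V) and ν = ξ_{V^⊥},
then N(ξ + tν) = N(ξ) for all t ≥ 0; in particular N(ξ + tν) ⊆ V. -/
theorem resN_constant_along_perp_ray
    (d : ℕ) (hd : 2 ≤ d) (B : Basis (Fin d) ℝ (EuclideanSpace ℝ (Fin d)))
    (κ : ℝ) (α : ℕ → ℝ) :
    ∃ ρ₀ : ℝ, ∀ ρ r : ℝ, ρ₀ ≤ ρ → GoodParams B ρ r κ α →
      ∀ n : ℕ, n ≤ d →
      ∀ V : Submodule ℝ (EuclideanSpace ℝ (Fin d)), IsLatticeSubspace B r V →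
        Module.finrank ℝ V = n →
      ∀ ξ ∈ Xi B ρ r α V,
      ∀ t : ℝ, 0 ≤ t →
        resN B ρ (α 1) r (ξ + t • (ξ - projV V ξ)) = resN B ρ (α 1) r ξ ∧
        resN B ρ (α 1) r (ξ + t • (ξ - projV V ξ)) ⊆
          (V : Set (EuclideanSpace ℝ (Fin d))) := by
  by_cases h : 0 < κ ∧ ∀ n < d, α n + 2 * κ * (d : ℝ) ^ 2 < α (n + 1)
  · obtain ⟨ρ₀, hρ₀⟩ := resN_constant_along_perp_ray_general B h.1.le (α := α) fun n hn => by
      linarith [h.2 n hn, mul_nonneg h.1.le (sq_nonneg (d : ℝ))]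
    exact ⟨ρ₀, fun ρ r hρ ⟨_, _, _, _, _, hr, _⟩ _ _ V hV _ => hρ₀ ρ hρ r hr V hV⟩
  · exact ⟨0, fun ρ r _ ⟨_, hκ, _, hα, _⟩ => absurd ⟨hκ, hα⟩ h⟩
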